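/- Let μ, ν be probability measures on ℝ^d, let T ≥ 1, and for each t ∈ {1,…,T} let σ_t > 0 and w_t > 0. Define DiKL(μ‖ν) = Σ_{t=1}^T w_t · KL(μ ∗ γ_{σ_t} ‖ ν ∗ γ_{σ_t}), where γ_σ = N(0, σ²·I_d). Then DiKL(μ‖ν) = 0 if and only if μ = ν. -/

import Mathlib

open MeasureTheory Real
open scoped ENNReal Classical

/-- The isotropic centered Gaussian measure `N(0, σ²·I_d)` on `ℝ^d`, given by its
density `(2πσ²)^(-d/2) · exp(-‖x‖²/(2σ²))` with respect to Lebesgue measure. -/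
noncomputable def gaussianIso (d : ℕ) (σ : ℝ) : Measure (EuclideanSpace ℝ (Fin d)) :=
  volume.withDensity fun x =>
    ENNReal.ofReal ((2 * π * σ ^ 2) ^ (-(d : ℝ) / 2) * Real.exp (-‖x‖ ^ 2 / (2 * σ ^ 2)))

/-- The Kullback–Leibler divergence `KL(P‖Q) = ∫ log (dP/dQ) dP` when `P ≪ Q`
(and the integral makes sense), and `+∞` otherwise. -/
noncomputable def KL {α : Type*} [MeasurableSpace α] (P Q : Measure α) : ℝ≥0∞ :=
  if P ≪ Q ∧ Integrable (fun x => Real.log (P.rnDeriv Q x).toReal) P then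
    ENNReal.ofReal (∫ x, Real.log (P.rnDeriv Q x).toReal ∂P) else ⊤

/-- The diffusive KL divergence: a positively weighted sum of KL divergences between
Gaussian-smoothed versions of the two measures at noise levels `σ 1, …, σ T`. -/
noncomputable def DiKL {d : ℕ} (T : ℕ) (w σ : Fin T → ℝ)
    (μ ν : Measure (EuclideanSpace ℝ (Fin d))) : ℝ≥0∞ :=
  ∑ t : Fin T, ENNReal.ofReal (w t) * KL (μ.conv (gaussianIso d (σ t))) (ν.conv (gaussianIso d (σ t)))

/-!
Convolution multiplies characteristic functions, and the characteristic function
`exp (-σ² ‖t‖² / 2)` of `N(0, σ²·I_d)` vanishes nowhere. It can therefore be cancelled, so Gaussian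
smoothing at a single noise level is already injective on finite measures. Each summand of `DiKL`
vanishes only if the two smoothed measures agree, by the equality case of Gibbs' inequality.
-/

section KullbackLeibler

variable {α : Type*} [MeasurableSpace α] {P Q : Measure α}

lemma KL_self (P : Measure α) [SigmaFinite P] : KL P P = 0 := by
  have log_rnDeriv_self : (fun x => Real.log (P.rnDeriv P x).toReal) =ᵐ[P] 0 := llr_self P
  have integrable_log : Integrable (fun x => Real.log (P.rnDeriv P x).toReal) P :=
    (integrable_zero ..).congr log_rnDeriv_self.symm
  rw [KL, if_pos ⟨Measure.AbsolutelyContinuous.rfl, integrable_log⟩,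
    integral_eq_zero_of_ae log_rnDeriv_self, ENNReal.ofReal_zero]

-- Mathlib's `klDiv` adds the correction `Q univ - P univ` to the integral, here nonpositive.
lemma klDiv_le_KL [IsFiniteMeasure P] (hmass : Q Set.univ ≤ P Set.univ) :
    InformationTheory.klDiv P Q ≤ KL P Q := by
  rw [KL]
  split_ifs with h
  · rw [InformationTheory.klDiv_of_ac_of_integrable h.1 h.2]
    have hmass_real : Q.real Set.univ ≤ P.real Set.univ :=
      ENNReal.toReal_mono (measure_ne_top P Set.univ) hmass
    refine ENNReal.ofReal_le_ofReal ?_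
    simp only [llr]
    linarith
  · exact le_top

lemma KL_eq_zero_iff [IsFiniteMeasure P] [IsFiniteMeasure Q] (hmass : Q Set.univ ≤ P Set.univ) :
    KL P Q = 0 ↔ P = Q := by
  refine ⟨fun h => ?_, fun h => h ▸ KL_self P⟩
  exact InformationTheory.klDiv_eq_zero_iff.mp (le_zero_iff.mp (h ▸ klDiv_le_KL hmass))

end KullbackLeibler

section Convolution

lemma conv_apply_univ {M : Type*} [AddMonoid M] [MeasurableSpace M] [MeasurableAdd₂ M]
    (μ ρ : Measure M) [SFinite ρ] :
    (μ.conv ρ) Set.univ = μ Set.univ * ρ Set.univ := by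
  rw [Measure.conv, Measure.map_apply measurable_add MeasurableSet.univ, Set.preimage_univ,
    ← Set.univ_prod_univ, Measure.prod_prod]

variable {E : Type*} [NormedAddCommGroup E] [InnerProductSpace ℝ E] [CompleteSpace E]
  [SecondCountableTopology E] [MeasurableSpace E] [BorelSpace E]
  {μ ν ρ : Measure E} [IsFiniteMeasure μ] [IsFiniteMeasure ν] [IsFiniteMeasure ρ]

lemma conv_left_inj_of_charFun_ne_zero (hρ : ∀ t, charFun ρ t ≠ 0) :
    μ.conv ρ = ν.conv ρ ↔ μ = ν := by
  refine ⟨fun h => Measure.ext_of_charFun (funext fun t => ?_), fun h => h ▸ rfl⟩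
  refine mul_right_cancel₀ (hρ t) ?_
  rw [← charFun_conv, ← charFun_conv, h]

lemma KL_conv_eq_zero_iff (hρ : ∀ t, charFun ρ t ≠ 0) (hmass : ν Set.univ ≤ μ Set.univ) :
    KL (μ.conv ρ) (ν.conv ρ) = 0 ↔ μ = ν := by
  have hmass_conv : (ν.conv ρ) Set.univ ≤ (μ.conv ρ) Set.univ := by
    rw [conv_apply_univ, conv_apply_univ]
    gcongr
  rw [KL_eq_zero_iff hmass_conv, conv_left_inj_of_charFun_ne_zero hρ]

end Convolution

section Gaussian

variable {d : ℕ} {σ : ℝ}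

lemma integral_cexp_neg_sq_norm_div_add_inner {V : Type*} [NormedAddCommGroup V]
    [InnerProductSpace ℝ V] [FiniteDimensional ℝ V] [MeasurableSpace V] [BorelSpace V]
    (hσ : σ ≠ 0) (t : V) :
    ∫ x : V, Complex.exp (-‖x‖ ^ 2 / (2 * σ ^ 2) + inner ℝ x t * Complex.I) =
      ((2 * π * σ ^ 2) ^ ((Module.finrank ℝ V : ℝ) / 2) : ℝ) *
        Complex.exp (-(σ ^ 2 * ‖t‖ ^ 2 / 2)) := by
  have hσ' : (σ : ℂ) ≠ 0 := Complex.ofReal_ne_zero.mpr hσ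
  have hre : 0 < ((1 / (2 * σ ^ 2) : ℝ) : ℂ).re := by
    rw [Complex.ofReal_re]
    positivity
  calc
    _ = ∫ x : V, Complex.exp (-((1 / (2 * σ ^ 2) : ℝ) : ℂ) * ‖x‖ ^ 2 +
          Complex.I * inner ℝ t x) := by
      congr! 3 with x
      rw [real_inner_comm]
      push_cast
      ring
    _ = _ := GaussianFourier.integral_cexp_neg_mul_sq_norm_add hre Complex.I t
    _ = _ := by
      rw [Complex.ofReal_cpow (by positivity), Complex.I_sq]
      push_cast
      congr 2 <;> field_simp
      norm_num

lemma charFun_gaussianIso (hσ : σ ≠ 0) (t : EuclideanSpace ℝ (Fin d)) :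
    charFun (gaussianIso d σ) t = Complex.exp (-(σ ^ 2 * ‖t‖ ^ 2 / 2)) := by
  have normalization : (2 * π * σ ^ 2) ^ (-(d : ℝ) / 2) * (2 * π * σ ^ 2) ^ ((d : ℝ) / 2) = 1 := by
    rw [neg_div, Real.rpow_neg (by positivity)]
    exact inv_mul_cancel₀ (by positivity)
  calc
    _ = ∫ x : EuclideanSpace ℝ (Fin d), ((2 * π * σ ^ 2) ^ (-(d : ℝ) / 2) : ℝ) *
          Complex.exp (-‖x‖ ^ 2 / (2 * σ ^ 2) + inner ℝ x t * Complex.I) := by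
      rw [charFun_apply, gaussianIso, integral_withDensity_eq_integral_toReal_smul (by fun_prop)
        (.of_forall fun _ => ENNReal.ofReal_lt_top)]
      congr! 2
      rw [ENNReal.toReal_ofReal (by positivity), Complex.real_smul, Complex.exp_add]
      push_cast
      ring
    _ = _ := by
      rw [integral_const_mul, integral_cexp_neg_sq_norm_div_add_inner hσ,
        finrank_euclideanSpace_fin, ← mul_assoc, ← Complex.ofReal_mul, normalization,
        Complex.ofReal_one, one_mul]

lemma charFun_gaussianIso_ne_zero (hσ : σ ≠ 0) (t : EuclideanSpace ℝ (Fin d)) :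
    charFun (gaussianIso d σ) t ≠ 0 := by
  rw [charFun_gaussianIso hσ]
  exact Complex.exp_ne_zero _

lemma isProbabilityMeasure_gaussianIso (hσ : σ ≠ 0) : IsProbabilityMeasure (gaussianIso d σ) := by
  have mass_eq_one : ((gaussianIso d σ).real Set.univ : ℂ) = 1 := by
    rw [← charFun_zero, charFun_gaussianIso hσ]
    simp
  exact ⟨(ENNReal.toReal_eq_one_iff _).mp (by exact_mod_cast mass_eq_one)⟩

end Gaussian

theorem diKL_eq_zero_iff_general {d : ℕ} {T : ℕ} (hT : 1 ≤ T) (w σ : Fin T → ℝ)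
    (hw : ∀ t, 0 < w t) (hσ : ∀ t, σ t ≠ 0)
    (μ ν : Measure (EuclideanSpace ℝ (Fin d)))
    [IsFiniteMeasure μ] [IsFiniteMeasure ν] (hmass : ν Set.univ ≤ μ Set.univ) :
    DiKL T w σ μ ν = 0 ↔ μ = ν := by
  have : Nonempty (Fin T) := ⟨⟨0, hT⟩⟩
  have smoothed_KL_eq_zero_iff (t : Fin T) :
      KL (μ.conv (gaussianIso d (σ t))) (ν.conv (gaussianIso d (σ t))) = 0 ↔ μ = ν := by
    have := isProbabilityMeasure_gaussianIso (d := d) (hσ t)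
    exact KL_conv_eq_zero_iff (charFun_gaussianIso_ne_zero (hσ t)) hmass
  have weight_ne_zero (t : Fin T) : ENNReal.ofReal (w t) ≠ 0 :=
    (ENNReal.ofReal_pos.mpr (hw t)).ne'
  simp only [DiKL, Finset.sum_eq_zero_iff, Finset.mem_univ, mul_eq_zero, weight_ne_zero,
    false_or, smoothed_KL_eq_zero_iff, forall_const]

/-- Validity of the diffusive KL divergence: `DiKL(μ‖ν) = 0` iff `μ = ν`. -/
theorem diKL_eq_zero_iff {d : ℕ} {T : ℕ} (hT : 1 ≤ T) (w σ : Fin T → ℝ)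
    (hw : ∀ t, 0 < w t) (hσ : ∀ t, 0 < σ t)
    (μ ν : Measure (EuclideanSpace ℝ (Fin d)))
    [IsProbabilityMeasure μ] [IsProbabilityMeasure ν] :
    DiKL T w σ μ ν = 0 ↔ μ = ν :=
  diKL_eq_zero_iff_general hT w σ hw (fun t => (hσ t).ne') μ ν
    (measure_univ.trans measure_univ.symm).le
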